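/- For every integer k ≥ 3 and every δ > 0, there exist c > 0 and N₀ such that for every N ≥ N₀ and every function f : Z_N → [0,1] with E[f(x) | x ∈ Z_N] ≥ δ, one has E[f(x)·f(x+d)·f(x+2d)···f(x+(k−1)d) | x, d ∈ Z_N] ≥ c. -/

import Mathlib

/-!
The theorem is deduced from the density Hales–Jewett theorem (`DHJ`): for every alphabet `α` and
every `δ > 0`, in some dimension `ι` every set of density `δ` of words `ι → α` contains a
combinatorial line. Identify `α` with `{0, …, k - 1}`, and map words to `ZMod N` by
`w ↦ x + ∑ i, w i * r i` with `x` and all `r i` uniform and independent. The set `{f ≥ δ / 2}` pulls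
back to a dense set of words with positive probability, so some fixed line lies in the pullback with
probability bounded below. The image of that line is a progression with uniformly distributed start
and, since the difference is a nonempty sum of the `r i`, uniformly distributed difference.

`DHJ` is proved by induction on the alphabet; `dhj_option` is the step from `α` to `Option α`. Words
over `Option α` containing `none` are lines over `α`, with `none` as the wildcard. Suppose the
theorem fails for `Option α`, and let `d > 0` be the infimum of the densities that force lines. Take
a line-free set `A` of density almost `d` in a cube whose dimension is split as `η × (κ + 1) + ρ`.
Slices of `A` in the last part are line-free, so none is much denser than `d`, and hence (there are
few of them compared with the precision) none is much sparser. Now `DHJ α` in dimension `η`, applied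
to random copies of the `α`-cube, gives a fixed line `L` over `α` whose `α`-points lie in `A` with
probability at least `θ > 0`. The random copies are built so that the endpoint of the line is
uniformly distributed over a `κ`-dimensional cube over `Option α`, once the rest is fixed. There `A`
has density about `d` on average, but is disjoint from the set of words all of whose companion
points lie in `A`. This set has density at least `θ` on average, and is an intersection of sets `D a`
that are insensitive to exchanging the letters `some a` and `none`.

By the multidimensional form of `DHJ α` (`exists_subspace_of_dense`), a dense insensitive set contains
large subspaces (`exists_subspace_of_insens`), and so can be almost partitioned into them
(`mean_mul_ind_le`); the same follows for the complement of an intersection of insensitive sets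
(`mean_mul_compl_le`). As `A` is line-free, its density on these subspaces is at most about `d`, so
`A` has density at most about `d * (1 - θ)` on average, a contradiction.
-/

open Finset

/-- The average (expectation with respect to the uniform measure) of `f` over `α`. -/
noncomputable def avg {α : Type*} [Fintype α] (f : α → ℝ) : ℝ :=
  (∑ x, f x) / (Fintype.card α)

open Combinatorics

noncomputable section

/-! ### Averages over finite types -/

/-- The average of `f` over a finite type. Only the proposition `Finite X` is required, so that the
value does not depend on decidability or enumeration data for the many index types below. -/
def mean {X : Type*} [Finite X] (f : X → ℝ) : ℝ :=
  letI := Fintype.ofFinite X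
  (∑ x, f x) / Fintype.card X

open Classical in
/-- The indicator of a proposition, as a real number. -/
def ind (p : Prop) : ℝ := if p then 1 else 0

lemma ind_true {p : Prop} (h : p) : ind p = 1 := by simp [ind, h]

lemma ind_false {p : Prop} (h : ¬p) : ind p = 0 := by simp [ind, h]

lemma ind_nonneg (p : Prop) : 0 ≤ ind p := by unfold ind; split_ifs <;> norm_num

lemma ind_le_one (p : Prop) : ind p ≤ 1 := by unfold ind; split_ifs <;> norm_num

lemma ind_mono {p q : Prop} (h : p → q) : ind p ≤ ind q := by
  by_cases hp : p
  · rw [ind_true hp, ind_true (h hp)]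
  · rw [ind_false hp]; exact ind_nonneg q

lemma ind_and (p q : Prop) : ind (p ∧ q) = ind p * ind q := by
  unfold ind; by_cases hp : p <;> by_cases hq : q <;> simp [hp, hq]

lemma ind_not (p : Prop) : ind (¬p) = 1 - ind p := by
  unfold ind; by_cases hp : p <;> simp [hp]

section mean

variable {X Y : Type*} [Finite X] [Finite Y]

lemma mean_eq {X : Type*} [Fintype X] (f : X → ℝ) : mean f = (∑ x, f x) / Fintype.card X := by
  unfold mean
  congr! 

lemma mean_add (f g : X → ℝ) : mean (fun x => f x + g x) = mean f + mean g := by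
  have := Fintype.ofFinite X
  simp [mean_eq, Finset.sum_add_distrib, add_div]

lemma mean_sub (f g : X → ℝ) : mean (fun x => f x - g x) = mean f - mean g := by
  have := Fintype.ofFinite X
  simp [mean_eq, Finset.sum_sub_distrib, sub_div]

lemma mean_const_mul (c : ℝ) (f : X → ℝ) : mean (fun x => c * f x) = c * mean f := by
  have := Fintype.ofFinite X
  simp [mean_eq, ← Finset.mul_sum, mul_div_assoc]

lemma mean_mul_const (c : ℝ) (f : X → ℝ) : mean (fun x => f x * c) = mean f * c := by
  simp_rw [mul_comm _ c]; exact mean_const_mul c f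

lemma mean_const [Nonempty X] (c : ℝ) : mean (fun _ : X => c) = c := by
  have := Fintype.ofFinite X
  simp [mean_eq]

lemma mean_mono {f g : X → ℝ} (h : ∀ x, f x ≤ g x) : mean f ≤ mean g := by
  have := Fintype.ofFinite X
  rw [mean_eq, mean_eq]
  gcongr with x
  exact h x

lemma mean_le [Nonempty X] {f : X → ℝ} {c : ℝ} (h : ∀ x, f x ≤ c) : mean f ≤ c :=
  (mean_mono h).trans_eq (mean_const c)

lemma le_mean [Nonempty X] {f : X → ℝ} {c : ℝ} (h : ∀ x, c ≤ f x) : c ≤ mean f :=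
  (mean_const c).symm.trans_le (mean_mono h)

lemma mean_nonneg {f : X → ℝ} (h : ∀ x, 0 ≤ f x) : 0 ≤ mean f := by
  have := Fintype.ofFinite X
  rw [mean_eq]
  exact div_nonneg (Finset.sum_nonneg fun x _ => h x) (Nat.cast_nonneg _)

lemma mean_equiv (e : X ≃ Y) (f : Y → ℝ) : mean (fun x => f (e x)) = mean f := by
  have := Fintype.ofFinite X
  have := Fintype.ofFinite Y
  rw [mean_eq, mean_eq, Fintype.card_congr e, e.sum_comp]

lemma mean_prod (f : X × Y → ℝ) : mean f = mean fun x => mean fun y => f (x, y) := by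
  have := Fintype.ofFinite X
  have := Fintype.ofFinite Y
  simp only [mean_eq, Fintype.sum_prod_type, Fintype.card_prod, ← Finset.sum_div, div_div]
  rw [Nat.cast_mul, mul_comm]

lemma mean_comm (f : X → Y → ℝ) :
    (mean fun x => mean fun y => f x y) = mean fun y => mean fun x => f x y := by
  rw [← mean_prod fun p : X × Y => f p.1 p.2, ← mean_prod fun p : Y × X => f p.2 p.1,
    ← mean_equiv (Equiv.prodComm X Y)]
  rfl

lemma mean_sum {J : Type*} (s : Finset J) (f : J → X → ℝ) :
    mean (fun x => ∑ j ∈ s, f j x) = ∑ j ∈ s, mean (f j) := by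
  have := Fintype.ofFinite X
  simp only [mean_eq]
  rw [Finset.sum_comm, Finset.sum_div]

lemma exists_le_of_le_mean [Nonempty X] {f : X → ℝ} {c : ℝ} (h : c ≤ mean f) : ∃ x, c ≤ f x := by
  by_contra! hc
  obtain ⟨x, hx⟩ := Finite.exists_max f
  linarith [mean_le hx, hc x]

lemma mean_sumArrow {ι κ β : Type*} [Finite ι] [Finite κ] [Finite β] (f : (ι ⊕ κ → β) → ℝ) :
    mean f = mean fun z : κ → β => mean fun y : ι → β => f (Sum.elim y z) := by
  rw [mean_comm, ← mean_prod fun p : (ι → β) × (κ → β) => f (Sum.elim p.1 p.2),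
    ← mean_equiv (Equiv.sumArrowEquivProdArrow ι κ β).symm]
  rfl

/-- Reverse Markov inequality: a function `f ≤ 1` of mean at least `ε` is at least `ε / 2` on
a set of density at least `ε / 2`. -/
lemma half_le_mean_ind [Nonempty X] {f : X → ℝ} {ε : ℝ} (h1 : ∀ x, f x ≤ 1)
    (hε : 0 ≤ ε) (h : ε ≤ mean f) : ε / 2 ≤ mean fun x => ind (ε / 2 ≤ f x) := by
  have : mean f ≤ mean fun x => ind (ε / 2 ≤ f x) + ε / 2 := by
    refine mean_mono fun x => ?_
    by_cases hx : ε / 2 ≤ f x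
    · rw [ind_true hx]; linarith [h1 x]
    · rw [ind_false hx]; linarith
  rw [mean_add, mean_const] at this
  linarith

/-- Pigeonhole: if a proportion at least `ε` of the points `x` have a `j` with `P j x`, then a
single `j` works for a proportion at least `ε / (#J + 1)`. -/
lemma exists_pigeonhole {J : Type*} [Finite J] [Nonempty X] {P : J → X → Prop} {ε : ℝ} (hε : 0 < ε)
    (h : ε ≤ mean fun x => ind (∃ j, P j x)) :
    ∃ j, ε / (Nat.card J + 1) ≤ mean fun x => ind (P j x) := by
  have := Fintype.ofFinite J
  by_contra! hc
  have h1 : (mean fun x => ind (∃ j, P j x)) ≤ mean fun x => ∑ j, ind (P j x) := by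
    refine mean_mono fun x => ?_
    by_cases hx : ∃ j, P j x
    · obtain ⟨j, hj⟩ := hx
      calc ind (∃ j, P j x) ≤ ind (P j x) := ind_mono fun _ => hj
        _ ≤ ∑ j, ind (P j x) :=
          Finset.single_le_sum (f := fun j => ind (P j x)) (fun i _ => ind_nonneg _)
            (Finset.mem_univ j)
    · rw [ind_false hx]; exact Finset.sum_nonneg fun i _ => ind_nonneg _
  rw [mean_sum] at h1
  have h2 : ∑ j, mean (fun x => ind (P j x)) ≤ ∑ _j : J, ε / (Nat.card J + 1) :=
    Finset.sum_le_sum fun j _ => (hc j).le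
  rw [Finset.sum_const, nsmul_eq_mul, Finset.card_univ, ← Nat.card_eq_fintype_card] at h2
  have h3 : (Nat.card J : ℝ) * (ε / (Nat.card J + 1)) < ε := by
    rw [← mul_div_assoc, div_lt_iff₀ (by positivity)]; nlinarith
  linarith

end mean

/-! ### Combinatorial subspaces -/

section subspaces

variable {η ζ ι κ β : Type*}

instance [Finite η] [Finite β] [Finite ι] : Finite (Subspace η β ι) :=
  Finite.of_injective Subspace.idxFun fun _ _ h => Subspace.ext h

instance [Finite β] [Finite ι] : Finite (Line β ι) :=
  Finite.of_injective Line.idxFun fun _ _ h => Line.ext h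

lemma subspace_injective (V : Subspace η β ι) : Function.Injective (V : (η → β) → ι → β) := by
  intro x y h
  funext e
  obtain ⟨i, hi⟩ := V.proper e
  have := congrFun h i
  rwa [Subspace.apply_inr hi, Subspace.apply_inr hi] at this

/-- Composition of combinatorial subspaces. -/
def subComp (V : Subspace η β ι) (W : Subspace ζ β η) : Subspace ζ β ι where
  idxFun i := (V.idxFun i).elim Sum.inl W.idxFun
  proper e := by
    obtain ⟨j, hj⟩ := W.proper e
    obtain ⟨i, hi⟩ := V.proper j
    exact ⟨i, by simp [hi, hj]⟩

lemma subComp_apply (V : Subspace η β ι) (W : Subspace ζ β η) (x : ζ → β) :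
    subComp V W x = V (W x) := by
  funext i
  cases h : V.idxFun i <;> simp [subComp, Subspace.coe_apply, h]

/-- The image of a combinatorial line under a combinatorial subspace embedding. -/
def lineComp (V : Subspace η β ι) (l : Line β η) : Line β ι where
  idxFun i := (V.idxFun i).elim some l.idxFun
  proper := by
    obtain ⟨j, hj⟩ := l.proper
    obtain ⟨i, hi⟩ := V.proper j
    exact ⟨i, by simp [hi, hj]⟩

lemma lineComp_apply (V : Subspace η β ι) (l : Line β η) (x : β) :
    lineComp V l x = V (l x) := by
  funext i
  cases h : V.idxFun i <;> simp [lineComp, Subspace.coe_apply, h]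

/-- A subspace in the left coordinates, with the right coordinates fixed. -/
def subLeft (V : Subspace η β ι) (z : κ → β) : Subspace η β (ι ⊕ κ) where
  idxFun := Sum.elim V.idxFun fun j => Sum.inl (z j)
  proper e := let ⟨i, hi⟩ := V.proper e; ⟨Sum.inl i, hi⟩

lemma subLeft_apply (V : Subspace η β ι) (z : κ → β) (x : η → β) :
    subLeft V z x = Sum.elim (V x) z := by
  funext i; cases i <;> rfl

/-- A subspace in the right coordinates, with the left coordinates fixed. -/
def subRight (y : ι → β) (V : Subspace η β κ) : Subspace η β (ι ⊕ κ) where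
  idxFun := Sum.elim (fun j => Sum.inl (y j)) V.idxFun
  proper e := let ⟨i, hi⟩ := V.proper e; ⟨Sum.inr i, hi⟩

lemma subRight_apply (y : ι → β) (V : Subspace η β κ) (x : η → β) :
    subRight y V x = Sum.elim y (V x) := by
  funext i; cases i <;> rfl

/-- The product of a line and a subspace; the direction of the line is indexed by `none`. -/
def lineProd (V : Subspace η β ι) (l : Line β κ) : Subspace (Option η) β (ι ⊕ κ) where
  idxFun := Sum.elim (fun i => (V.idxFun i).map id some)
    fun j => (l.idxFun j).elim (Sum.inr none) Sum.inl
  proper e := by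
    cases e with
    | none => obtain ⟨j, hj⟩ := l.proper; exact ⟨Sum.inr j, by simp [hj]⟩
    | some e => obtain ⟨i, hi⟩ := V.proper e; exact ⟨Sum.inl i, by simp [hi]⟩

lemma lineProd_apply (V : Subspace η β ι) (l : Line β κ) (x : Option η → β) :
    lineProd V l x = Sum.elim (V fun e => x (some e)) (l (x none)) := by
  funext i
  cases i with
  | inl i => cases h : V.idxFun i <;> simp [lineProd, Subspace.coe_apply, h]
  | inr j => cases h : l.idxFun j <;> simp [lineProd, Subspace.coe_apply, h]

end subspaces

/-! ### Density Hales–Jewett, and its multidimensional form -/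

/-- `HJDensity β δ`: in some finite dimension, every subset of the cube over the alphabet `β` of
density at least `δ` contains a combinatorial line. -/
def HJDensity (β : Type) [Finite β] (δ : ℝ) : Prop :=
  ∃ (ι : Type) (_ : Finite ι), ∀ A : Set (ι → β), δ ≤ mean (fun x => ind (x ∈ A)) →
    ∃ l : Line β ι, ∀ b, l b ∈ A

/-- The density Hales–Jewett theorem for the alphabet `β`. -/
def DHJ (β : Type) [Finite β] : Prop := ∀ δ : ℝ, 0 < δ → HJDensity β δ

/-- The multidimensional density Hales–Jewett theorem follows from the one-dimensional one. -/
lemma exists_subspace_of_dense {α : Type} [Finite α] [Nonempty α] (hα : DHJ α)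
    (η : Type) [Finite η] :
    ∀ δ : ℝ, 0 < δ → ∃ (ι : Type) (_ : Finite ι), ∀ A : Set (ι → α),
      δ ≤ mean (fun x => ind (x ∈ A)) → ∃ V : Subspace η α ι, ∀ x, V x ∈ A := by
  induction η using Finite.induction_empty_option with
  | @of_equiv η ζ e ih =>
    intro δ hδ
    obtain ⟨ι, hι, h⟩ := ih δ hδ
    refine ⟨ι, hι, fun A hA => ?_⟩
    obtain ⟨V, hV⟩ := h A hA
    refine ⟨V.reindex e (Equiv.refl α) (Equiv.refl ι), fun x => ?_⟩
    convert hV (x ∘ e) using 1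
    funext i
    simp
  | h_empty =>
    intro δ hδ
    refine ⟨PEmpty, inferInstance, fun A hA => ?_⟩
    have : ∃ x, x ∈ A := by
      by_contra! hc
      have h0 : (mean fun x => ind (x ∈ A)) ≤ 0 := mean_le fun x => (ind_false (hc x)).le
      linarith
    obtain ⟨x, hx⟩ := this
    refine ⟨⟨PEmpty.elim, fun e => e.elim⟩, fun y => ?_⟩
    rwa [Subsingleton.elim (Subspace.toFun _ y) x]
  | @h_option η _ ih =>
    intro δ hδ
    obtain ⟨ι, hι, h⟩ := ih (δ / 2) (by linarith)
    have hθ : 0 < δ / 2 / (Nat.card (Subspace η α ι) + 1) := by positivity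
    obtain ⟨κ, hκ, h'⟩ := hα _ hθ
    refine ⟨ι ⊕ κ, inferInstance, fun A hA => ?_⟩
    rw [mean_sumArrow] at hA
    have h1 := half_le_mean_ind (fun z => mean_le fun y => ind_le_one _) hδ.le hA
    have h2 : δ / 2 ≤ mean fun z : κ → α =>
        ind (∃ V : Subspace η α ι, ∀ x, Sum.elim (V x) z ∈ A) :=
      h1.trans (mean_mono fun z => ind_mono fun hz => h {y | Sum.elim y z ∈ A} hz)
    obtain ⟨V, hV⟩ := exists_pigeonhole (by linarith) h2
    obtain ⟨l, hl⟩ := h' {z | ∀ x, Sum.elim (V x) z ∈ A} hV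
    exact ⟨lineProd V l, fun x => by rw [lineProd_apply]; exact hl _ _⟩

/-! ### Insensitive sets -/

/-- A set of words over `Option α` is `a`-insensitive if membership is unaffected by exchanging the
letters `some a` and `none`, that is, depends only on the word obtained by replacing `none` by
`some a`. -/
def Insens {α ι : Type*} (a : α) (D : Set (ι → Option α)) : Prop :=
  ∀ x y : ι → Option α, (∀ i, (x i).getD a = (y i).getD a) → x ∈ D → y ∈ D

lemma Insens.compl {α ι : Type*} {a : α} {D : Set (ι → Option α)} (h : Insens a D) :
    Insens a Dᶜ := fun x y hxy hx hy => hx (h y x (fun i => (hxy i).symm) hy)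

lemma Insens.comp {α ι η : Type*} {a : α} {D : Set (ι → Option α)} (h : Insens a D)
    (V : Subspace η (Option α) ι) : Insens a {x | V x ∈ D} := by
  intro x y hxy hx
  refine h _ _ (fun i => ?_) hx
  cases hi : V.idxFun i <;> simp [Subspace.coe_apply, hi, hxy]

lemma mean_eval {ι Y : Type*} [Finite ι] [Finite Y] [Nonempty Y] (e : ι) (h : Y → ℝ) :
    (mean fun u : ι → Y => h (u e)) = mean h := by
  classical
  rw [← mean_equiv (Equiv.funSplitAt e Y).symm, mean_prod]
  simp [Equiv.funSplitAt, Equiv.piSplitAt, mean_const]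

lemma mean_ind_eq {Y : Type*} [Finite Y] (c : Y) :
    (mean fun y => ind (y = c)) = 1 / Nat.card Y := by
  classical
  have := Fintype.ofFinite Y
  rw [mean_eq, Nat.card_eq_fintype_card]
  simp [ind]

section insens

variable {α : Type} [Finite α] [Nonempty α]

/-- In high dimension, a dense `a`-insensitive set contains subspaces of any given dimension.

The uniform measure on words over `Option α` is not uniform on words over `α`. The coordinates are
therefore grouped in blocks, and in each block the letter at one coordinate not equal to `none` is
resampled uniformly from `α`; this preserves the uniform measure, and blocks consisting of the
letter `none` only are rare. -/
lemma exists_subspace_of_insens (hα : DHJ α) (a : α) (η : Type) [Finite η] (ε : ℝ) (hε : 0 < ε) :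
    ∃ (ι : Type) (_ : Finite ι), ∀ D : Set (ι → Option α), Insens a D →
      ε ≤ mean (fun x => ind (x ∈ D)) → ∃ V : Subspace η (Option α) ι, ∀ x, V x ∈ D := by
  classical
  obtain ⟨ι, hι, h⟩ := exists_subspace_of_dense hα η (ε / 2) (by linarith)
  obtain ⟨n, hn⟩ : ∃ n : ℕ, (Nat.card ι : ℝ) * (1 / 2) ^ n < ε / 2 := by
    obtain ⟨n, hn⟩ := exists_pow_lt_of_lt_one (show 0 < ε / 2 / (Nat.card ι + 1) by positivity)
      (show (1 / 2 : ℝ) < 1 by norm_num)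
    refine ⟨n, ?_⟩
    rw [lt_div_iff₀ (by positivity)] at hn
    nlinarith [show (0 : ℝ) < (1 / 2) ^ n by positivity]
  -- one extra coordinate makes the blocks nonempty
  let κ := Fin (n + 1)
  -- `sel S` is an element of `S`, if there is one
  obtain ⟨sel, hsel⟩ : ∃ sel : Set κ → κ, ∀ S : Set κ, S.Nonempty → sel S ∈ S :=
    ⟨fun S => if hS : S.Nonempty then hS.some else 0, fun S hS => by simp [hS, hS.some_mem]⟩
  let jj : (κ → Option α) → κ := fun v => sel {j | v j ≠ none}
  let put : (κ → Option α) → α → (κ → Option α) := fun v b j =>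
    if j = jj v ∧ v j ≠ none then some b else v j
  have put_none : ∀ v b j, put v b j ≠ none ↔ v j ≠ none := by
    intro v b j
    by_cases hj : j = jj v ∧ v j ≠ none
    · simp [put, hj.1, hj.1 ▸ hj.2]
    · simp [put, hj]
  have jj_put : ∀ v b, jj (put v b) = jj v := by
    intro v b
    simp only [jj]
    congr 1
    ext j
    exact put_none v b j
  let swap : (ι → κ → Option α) × (ι → α) → (ι → κ → Option α) × (ι → α) := fun p =>
    (fun e => put (p.1 e) (p.2 e), fun e => (p.1 e (jj (p.1 e))).getD (p.2 e))
  have hswap : Function.Involutive swap := by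
    rintro ⟨u, w⟩
    ext e
    · rename_i j b
      simp only [swap]
      by_cases hj : j = jj (u e) ∧ u e j ≠ none
      · have : j = jj (put (u e) (w e)) ∧ put (u e) (w e) j ≠ none :=
          ⟨by rw [jj_put]; exact hj.1, by rw [put_none]; exact hj.2⟩
        obtain ⟨b, hb⟩ := Option.ne_none_iff_exists'.1 hj.2
        rw [show put (put (u e) (w e)) _ j = some _ from if_pos this, ← hj.1, hb]
        simp
      · have : ¬(j = jj (put (u e) (w e)) ∧ put (u e) (w e) j ≠ none) := by
          rw [jj_put, put_none]; exact hj
        rw [show put (put (u e) (w e)) _ j = _ from if_neg this,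
          show put (u e) (w e) j = _ from if_neg hj]
    · simp only [swap]
      rw [jj_put]
      by_cases hj : u e (jj (u e)) = none
      · simp [put, hj]
      · simp [put, hj]
  refine ⟨ι × κ, inferInstance, fun D hD hdens => ?_⟩
  let F : (ι → κ → Option α) → ℝ := fun u => ind (Function.uncurry u ∈ D)
  have hF : ε ≤ mean F := by
    rw [← mean_equiv (Equiv.curry ι κ (Option α)).symm] at hdens
    exact hdens
  let bad : (ι → κ → Option α) → Prop := fun u => ∃ e, u e = fun _ => none
  have hbad : mean (fun u => ind (bad u)) < ε / 2 := by
    by_contra! hc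
    obtain ⟨e, he⟩ := exists_pigeonhole (by linarith) hc
    rw [mean_eval e (fun v => ind (v = fun _ => none)), mean_ind_eq,
      div_le_iff₀ (by positivity)] at he
    have h2 : (1 : ℝ) / Nat.card (κ → Option α) ≤ (1 / 2) ^ (n + 1) := by
      have : 2 ≤ Nat.card (Option α) := by
        rw [Finite.card_option]; have := Nat.card_pos (α := α); omega
      rw [Nat.card_fun, one_div_pow]
      apply one_div_le_one_div_of_le (by positivity)
      simp only [κ, Nat.card_eq_fintype_card, Fintype.card_fin]
      push_cast
      gcongr
      exact_mod_cast this
    have h3 : (1 : ℝ) ≤ Nat.card ι := by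
      have : Nonempty ι := ⟨e⟩
      exact_mod_cast Nat.card_pos (α := ι)
    have h4 : (0 : ℝ) < (1 / 2) ^ n := by positivity
    rw [pow_succ] at h2
    nlinarith
  have h1 : mean F = mean fun u : ι → κ → Option α => mean fun w : ι → α => F fun e => put (u e) (w e) := by
    rw [← mean_prod fun p : (ι → κ → Option α) × (ι → α) => F fun e => put (p.1 e) (p.2 e)]
    have := mean_equiv hswap.toPerm fun p => F p.1
    rw [mean_prod (fun p => F p.1)] at this
    simp only [mean_const] at this
    exact this.symm
  obtain ⟨u, hu, hu'⟩ : ∃ u, ¬bad u ∧ ε / 2 ≤ mean fun w : ι → α => F fun e => put (u e) (w e) := by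
    by_contra! hc
    have : mean F ≤ mean fun u => ε / 2 + ind (bad u) := by
      rw [h1]
      refine mean_mono fun u => ?_
      by_cases hb : bad u
      · rw [ind_true hb]
        have : (mean fun w : ι → α => F fun e => put (u e) (w e)) ≤ 1 :=
          mean_le fun w => ind_le_one _
        linarith
      · linarith [hc u hb, ind_nonneg (bad u)]
    rw [mean_add, mean_const] at this
    linarith
  obtain ⟨V, hV⟩ := h {w | Function.uncurry (fun e => put (u e) (w e)) ∈ D} hu'
  have hne : ∀ e, u e (jj (u e)) ≠ none := by
    intro e
    apply hsel {j | u e j ≠ none}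
    by_contra hc
    refine hu ⟨e, funext fun j => ?_⟩
    by_contra hj
    exact hc ⟨j, hj⟩
  refine ⟨⟨fun p => if p.2 = jj (u p.1) then (V.idxFun p.1).map some id else Sum.inl (u p.1 p.2),
    fun e => ?_⟩, fun x => ?_⟩
  · obtain ⟨i, hi⟩ := V.proper e
    exact ⟨(i, jj (u i)), by simp [hi]⟩
  · refine hD _ _ ?_ (hV fun e => (x e).getD a)
    rintro ⟨e, j⟩
    by_cases hj : j = jj (u e)
    · subst hj
      cases hi : V.idxFun e <;> simp [Function.uncurry, put, hne, Subspace.coe_apply, hi]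
    · simp [Function.uncurry, put, hj, Subspace.coe_apply]

/-- In high dimension, if `g ≤ 1` has nonpositive mean on every subspace of a given dimension, then
its mean over an insensitive set is almost nonpositive.

The reason is that an insensitive set can be exhausted, up to small measure, by disjoint subspaces of
that dimension: while the remaining density exceeds `ε`, one can split off a product `range V × Z` of
density at least `c`, and what is left is insensitive in the coordinates not used so far. -/
lemma mean_mul_ind_le (hα : DHJ α) (a : α) (η : Type) [Finite η] (ε : ℝ) (hε : 0 < ε) :
    ∃ (ι : Type) (_ : Finite ι), ∀ g : (ι → Option α) → ℝ, (∀ x, g x ≤ 1) →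
      (∀ V : Subspace η (Option α) ι, mean (fun x => g (V x)) ≤ 0) →
      ∀ D : Set (ι → Option α), Insens a D → mean (fun x => g x * ind (x ∈ D)) ≤ ε := by
  classical
  obtain ⟨ι₁, hι₁, hI⟩ := exists_subspace_of_insens hα a η (ε / 2 / 2) (by linarith)
  set c : ℝ := min 1 ((ε / 2 / 2 / (Nat.card (Subspace η (Option α) ι₁) + 1)) *
    (1 / Nat.card (ι₁ → Option α))) with hc
  have hc0 : 0 < c := by
    have : 0 < Nat.card (ι₁ → Option α) := Nat.card_pos
    apply lt_min one_pos; positivity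
  have hc1 : c ≤ 1 := min_le_left _ _
  have key : ∀ t : ℕ, ∃ (ι : Type) (_ : Finite ι), ∀ g : (ι → Option α) → ℝ, (∀ x, g x ≤ 1) →
      (∀ V : Subspace η (Option α) ι, mean (fun x => g (V x)) ≤ 0) →
      ∀ D : Set (ι → Option α), Insens a D →
      mean (fun x => g x * ind (x ∈ D)) ≤ ε / 2 + (1 - c) ^ t * mean (fun x => ind (x ∈ D)) := by
    intro t
    induction t with
    | zero =>
      refine ⟨PEmpty, inferInstance, fun g hg _ D _ => ?_⟩
      have : mean (fun x => g x * ind (x ∈ D)) ≤ mean (fun x => ind (x ∈ D)) :=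
        mean_mono fun x => mul_le_of_le_one_left (ind_nonneg _) (hg x)
      rw [pow_zero]; linarith
    | succ t ih =>
      obtain ⟨ι₂, hι₂, ih⟩ := ih
      refine ⟨ι₁ ⊕ ι₂, inferInstance, fun g hg hgV D hD => ?_⟩
      have hpow : 0 ≤ (1 - c) ^ t := pow_nonneg (by linarith) t
      by_cases hsmall : mean (fun x => ind (x ∈ D)) < ε / 2
      · have : mean (fun x => g x * ind (x ∈ D)) ≤ mean (fun x => ind (x ∈ D)) :=
          mean_mono fun x => mul_le_of_le_one_left (ind_nonneg _) (hg x)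
        have h0 : 0 ≤ (1 - c) ^ (t + 1) * mean (fun x => ind (x ∈ D)) :=
          mul_nonneg (pow_nonneg (by linarith) _) (mean_nonneg fun x => ind_nonneg _)
        linarith
      push Not at hsmall
      have hslice : ∀ z : ι₂ → Option α, Insens a {y | Sum.elim y z ∈ D} := by
        intro z x y hxy hx
        refine hD _ _ ?_ hx
        rintro (i | i) <;> simp [hxy]
      rw [mean_sumArrow] at hsmall
      have h1 := half_le_mean_ind (fun z => mean_le fun y => ind_le_one _) (by linarith) hsmall
      have h2 : ε / 2 / 2 ≤ mean fun z : ι₂ → Option α =>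
          ind (∃ V : Subspace η (Option α) ι₁, ∀ x, Sum.elim (V x) z ∈ D) :=
        h1.trans (mean_mono fun z => ind_mono fun hz => hI {y | Sum.elim y z ∈ D} (hslice z) hz)
      obtain ⟨V, hV⟩ := exists_pigeonhole (by linarith) h2
      let B : Set (ι₁ → Option α) := Set.range V
      let Z : Set (ι₂ → Option α) := {z | ∀ x, Sum.elim (V x) z ∈ D}
      let R : (ι₁ → Option α) → Set (ι₂ → Option α) := fun y =>
        {z | Sum.elim y z ∈ D ∧ ¬(y ∈ B ∧ z ∈ Z)}
      have hZ : Insens a Z := by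
        intro z z' hzz hz x
        refine hD _ _ ?_ (hz x)
        rintro (i | i) <;> simp [hzz]
      have hR : ∀ y, Insens a (R y) := by
        intro y z z' hzz hz
        refine ⟨hD _ _ ?_ hz.1, fun h => hz.2 ⟨h.1, hZ _ _ (fun i => (hzz i).symm) h.2⟩⟩
        rintro (i | i) <;> simp [hzz]
      have hsplit : ∀ y z, ind (Sum.elim y z ∈ D) = ind (y ∈ B) * ind (z ∈ Z) + ind (z ∈ R y) := by
        intro y z
        rw [← ind_and]
        by_cases hyz : y ∈ B ∧ z ∈ Z
        · have hmem : Sum.elim y z ∈ D := by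
            obtain ⟨⟨x, rfl⟩, hz⟩ := hyz
            exact hz x
          rw [ind_true hmem, ind_true hyz, ind_false (fun h : z ∈ R y => h.2 hyz)]
          norm_num
        · rw [ind_false hyz, zero_add]
          congr 1
          exact propext ⟨fun h => ⟨h, hyz⟩, fun h => h.1⟩
      have hB : 1 / (Nat.card (ι₁ → Option α) : ℝ) ≤ mean fun y => ind (y ∈ B) := by
        rw [← mean_ind_eq (V fun _ => none)]
        exact mean_mono fun y => ind_mono fun h => ⟨_, h.symm⟩
      have hgB : ∀ z, mean (fun y => g (Sum.elim y z) * ind (y ∈ B)) ≤ 0 := by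
        intro z
        have hz := hgV (subLeft V z)
        simp only [subLeft_apply] at hz
        have := Fintype.ofFinite (ι₁ → Option α)
        have := Fintype.ofFinite (η → Option α)
        rw [mean_eq] at hz ⊢
        have hpos : (0 : ℝ) < Fintype.card (η → Option α) := by exact_mod_cast Fintype.card_pos
        have hs : ∑ x, g (Sum.elim (V x) z) ≤ 0 := by
          by_contra! hlt
          exact absurd hz (not_le.2 (div_pos hlt hpos))
        apply div_nonpos_of_nonpos_of_nonneg _ (Nat.cast_nonneg _)
        calc ∑ y, g (Sum.elim y z) * ind (y ∈ B)
            = ∑ y ∈ Finset.univ.image V, g (Sum.elim y z) := by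
              rw [← Finset.sum_subset (Finset.subset_univ (Finset.univ.image V))]
              · refine Finset.sum_congr rfl fun y hy => ?_
                rw [ind_true (show y ∈ B by simpa [B] using hy), mul_one]
              · intro y _ hy
                rw [ind_false (show y ∉ B by simpa [B] using hy), mul_zero]
          _ = ∑ x, g (Sum.elim (V x) z) := Finset.sum_image fun x _ y _ h => subspace_injective V h
          _ ≤ 0 := hs
      have hμR : (mean fun y => mean fun z => ind (z ∈ R y)) ≤
          mean (fun x => ind (x ∈ D)) - c := by
        have : mean (fun x => ind (x ∈ D)) = (mean fun y => ind (y ∈ B)) * mean (fun z => ind (z ∈ Z))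
            + mean fun y => mean fun z => ind (z ∈ R y) := by
          rw [mean_sumArrow, mean_comm, ← mean_mul_const, ← mean_add]
          congr 1
          funext y
          rw [← mean_const_mul, ← mean_add]
          congr 1
          funext z
          exact hsplit y z
        have hcle : c ≤ (mean fun y => ind (y ∈ B)) * mean (fun z => ind (z ∈ Z)) := by
          refine (min_le_right _ _).trans ?_
          rw [mul_comm]
          exact mul_le_mul hB hV (by positivity) (mean_nonneg fun _ => ind_nonneg _)
        linarith
      have hmain : mean (fun x => g x * ind (x ∈ D)) ≤
          mean fun y => ε / 2 + (1 - c) ^ t * mean fun z => ind (z ∈ R y) := by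
        have : mean (fun x => g x * ind (x ∈ D)) =
            (mean fun z => ind (z ∈ Z) * mean fun y => g (Sum.elim y z) * ind (y ∈ B)) +
            mean fun y => mean fun z => g (Sum.elim y z) * ind (z ∈ R y) := by
          rw [mean_comm fun y z => g (Sum.elim y z) * ind (z ∈ R y), mean_sumArrow, ← mean_add]
          congr 1
          funext z
          rw [← mean_const_mul, ← mean_add]
          congr 1
          funext y
          rw [hsplit]
          ring
        rw [this]
        have hle : (mean fun z => ind (z ∈ Z) * mean fun y => g (Sum.elim y z) * ind (y ∈ B)) ≤ 0 :=
          mean_le fun z => mul_nonpos_of_nonneg_of_nonpos (ind_nonneg _) (hgB z)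
        have hle' : (mean fun y => mean fun z => g (Sum.elim y z) * ind (z ∈ R y)) ≤
            mean fun y => ε / 2 + (1 - c) ^ t * mean fun z => ind (z ∈ R y) := by
          refine mean_mono fun y => ih (fun z => g (Sum.elim y z)) (fun z => hg _) (fun W => ?_) _ (hR y)
          simpa only [subRight_apply] using hgV (subRight y W)
        linarith
      refine hmain.trans ?_
      rw [mean_add, mean_const, mean_const_mul, pow_succ, mul_assoc]
      gcongr
      have : mean (fun x => ind (x ∈ D)) ≤ 1 := mean_le fun x => ind_le_one _
      nlinarith
  obtain ⟨t, ht⟩ := exists_pow_lt_of_lt_one (show 0 < ε / 2 by linarith) (show 1 - c < 1 by linarith)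
  obtain ⟨ι, hι, h⟩ := key t
  refine ⟨ι, hι, fun g hg hgV D hD => (h g hg hgV D hD).trans ?_⟩
  have : mean (fun x => ind (x ∈ D)) ≤ 1 := mean_le fun x => ind_le_one _
  have h0 : 0 ≤ (1 - c) ^ t := pow_nonneg (by linarith) t
  nlinarith

/-- The analogue of `mean_mul_ind_le` for the complement of an intersection of insensitive sets, one
for each letter of `S`. The bound on the mean of `g` itself is carried along for the induction. -/
lemma mean_mul_compl_le (hα : DHJ α) (S : Finset α) (η : Type) [Finite η] :
    ∀ ε : ℝ, 0 < ε → ∃ (ι : Type) (_ : Finite ι), ∀ g : (ι → Option α) → ℝ, (∀ x, g x ≤ 1) →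
      (∀ V : Subspace η (Option α) ι, mean (fun x => g (V x)) ≤ 0) →
      ∀ D : α → Set (ι → Option α), (∀ a, Insens a (D a)) →
      mean g ≤ ε ∧ mean (fun x => g x * (1 - ind (∀ a ∈ S, x ∈ D a))) ≤ ε := by
  classical
  induction S using Finset.induction_on with
  | empty =>
    intro ε hε
    refine ⟨η, inferInstance, fun g hg hgV D hD => ⟨?_, ?_⟩⟩
    · exact (hgV default).trans hε.le
    · refine mean_le fun x => ?_
      rw [ind_true (by simp)]
      linarith
  | insert a S _ ih =>
    intro ε hε
    obtain ⟨ι₁, hι₁, h₁⟩ := ih (ε / 4) (by linarith)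
    obtain ⟨ι, hι, h⟩ := mean_mul_ind_le hα a ι₁ (ε / 4) (by linarith)
    refine ⟨ι, hι, fun g hg hgV D hD => ?_⟩
    let H : (ι → Option α) → ℝ := fun x => 1 - ind (∀ b ∈ S, x ∈ D b)
    have hH0 : ∀ x, 0 ≤ H x := fun x => sub_nonneg.2 (ind_le_one _)
    have hH1 : ∀ x, H x ≤ 1 := fun x => sub_le_self _ (ind_nonneg _)
    have hW : ∀ W : Subspace ι₁ (Option α) ι, mean (fun x => g (W x)) ≤ ε / 4 ∧
        mean (fun x => g (W x) * H (W x)) ≤ ε / 4 := by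
      intro W
      refine h₁ (fun x => g (W x)) (fun x => hg _) (fun V => ?_) (fun b => {x | W x ∈ D b})
        (fun b => (hD b).comp W)
      simpa only [subComp_apply] using hgV (subComp W V)
    -- both `g` and `g * H` have mean at most `ε / 4` on subspaces, hence on insensitive sets
    have aux : ∀ f : (ι → Option α) → ℝ, (∀ x, f x ≤ 1) →
        (∀ W : Subspace ι₁ (Option α) ι, mean (fun x => f (W x)) ≤ ε / 4) →
        ∀ E : Set (ι → Option α), Insens a E → mean (fun x => f x * ind (x ∈ E)) ≤ ε / 2 := by
      intro f hf hfW E hE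
      have := h (fun x => f x - ε / 4) (fun x => by linarith [hf x])
        (fun W => by rw [mean_sub, mean_const]; linarith [hfW W]) E hE
      simp only [sub_mul] at this
      rw [mean_sub, mean_const_mul] at this
      have h1 : mean (fun x => ind (x ∈ E)) ≤ 1 := mean_le fun x => ind_le_one _
      nlinarith
    have hgH : ∀ x, g x * H x ≤ 1 := fun x => by nlinarith [hg x, hH0 x, hH1 x]
    refine ⟨?_, ?_⟩
    · have := aux g hg (fun W => (hW W).1) Set.univ (fun x y _ _ => trivial)
      simp only [Set.mem_univ, ind_true, mul_one] at this
      exact this.trans (by linarith)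
    · have e1 := aux g hg (fun W => (hW W).1) (D a)ᶜ (hD a).compl
      have e2 := aux _ hgH (fun W => (hW W).2) (D a) (hD a)
      have : (mean fun x => g x * (1 - ind (∀ b ∈ insert a S, x ∈ D b))) =
          mean (fun x => g x * ind (x ∈ (D a)ᶜ)) + mean (fun x => g x * H x * ind (x ∈ D a)) := by
        rw [← mean_add]
        congr 1
        funext x
        simp only [Finset.forall_mem_insert, ind_and, Set.mem_compl_iff, ind_not, H]
        ring
      linarith

end insens

/-! ### The inductive step: enlarging the alphabet by one letter -/

lemma HJDensity.mono {β : Type} [Finite β] {δ δ' : ℝ} (h : HJDensity β δ) (hδ : δ ≤ δ') :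
    HJDensity β δ' := by
  obtain ⟨ι, hι, h⟩ := h
  exact ⟨ι, hι, fun A hA => h A (hδ.trans hA)⟩

/-- Resampling one coordinate preserves the mean. -/
lemma mean_update {ι Y : Type*} [Finite ι] [Finite Y] [Nonempty Y] [DecidableEq ι] (e : ι)
    (f : (ι → Y) → ℝ) : mean f = mean fun u => mean fun y => f (Function.update u e y) := by
  let swap : (ι → Y) × Y → (ι → Y) × Y := fun p => (Function.update p.1 e p.2, p.1 e)
  have hswap : Function.Involutive swap := fun p => by simp [swap]
  have := mean_equiv hswap.toPerm fun p => f p.1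
  rw [mean_prod (fun p => f p.1), mean_prod] at this
  simp only [mean_const] at this
  exact this.symm

/-- If `F` never exceeds its mean by more than `2 * γ`, then no single value can be much below the
mean, since it accounts for a proportion `1 / Nat.card Y` of the average. -/
lemma le_of_mean_ge {Y : Type*} [Finite Y] [Nonempty Y] {F : Y → ℝ} {d γ : ℝ}
    (hup : ∀ y, F y ≤ d + γ) (hmean : d - γ ≤ mean F) (y : Y) :
    d + γ - 2 * γ * Nat.card Y ≤ F y := by
  have h1 : (mean fun x => ind (x = y) * (d + γ - F y)) ≤ mean fun x => d + γ - F x := by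
    refine mean_mono fun x => ?_
    by_cases hx : x = y
    · rw [ind_true hx, hx, one_mul]
    · rw [ind_false hx, zero_mul]; linarith [hup x]
  rw [mean_mul_const, mean_ind_eq, mean_sub, mean_const] at h1
  have hpos : (0 : ℝ) < Nat.card Y := by exact_mod_cast Nat.card_pos
  rw [div_mul_eq_mul_div, one_mul, div_le_iff₀ hpos] at h1
  nlinarith

set_option maxHeartbeats 1000000 in
/-- The density Hales–Jewett theorem for `α` implies the one for `Option α`. -/
theorem dhj_option {α : Type} [Finite α] [Nonempty α] (hα : DHJ α) : DHJ (Option α) := by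
  classical
  by_contra hcon
  have := Fintype.ofFinite α
  obtain ⟨δ₀, hδ₀, hnot⟩ : ∃ δ : ℝ, 0 < δ ∧ ¬HJDensity (Option α) δ := by
    simpa [DHJ] using hcon
  -- `d` is the critical density, the limit of the maximal densities of line-free sets
  let G : Set ℝ := {δ | 0 < δ ∧ HJDensity (Option α) δ}
  have hG0 : ∀ δ ∈ G, δ₀ ≤ δ := fun δ hδ => by
    by_contra! hlt
    exact hnot (hδ.2.mono hlt.le)
  have hG2 : (2 : ℝ) ∈ G := by
    refine ⟨by norm_num, PEmpty, inferInstance, fun A hA => ?_⟩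
    have : (mean fun x => ind (x ∈ A)) ≤ 1 := mean_le fun x => ind_le_one _
    linarith
  set d := sInf G with hd
  have hd0 : 0 < d := hδ₀.trans_le (le_csInf ⟨2, hG2⟩ hG0)
  have hlow : ∀ δ, 0 < δ → δ < d → ¬HJDensity (Option α) δ := fun δ h0 h1 h2 =>
    notMem_of_lt_csInf h1 ⟨δ₀, hG0⟩ ⟨h0, h2⟩
  have hhigh : ∀ γ, 0 < γ → HJDensity (Option α) (d + γ) := fun γ hγ => by
    obtain ⟨δ, hδ, hlt⟩ := exists_lt_of_csInf_lt ⟨2, hG2⟩ (show sInf G < d + γ by linarith)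
    exact hδ.2.mono hlt.le
  obtain ⟨η, hη, hline⟩ := hα (d / 2 / 2) (by linarith)
  set θ : ℝ := d / 2 / 2 / (Nat.card (Line α η) + 1) with hθ
  have hθ0 : 0 < θ := by positivity
  set τ : ℝ := min (θ * d / 4) (d / 4) with hτ
  have hτ0 : 0 < τ := by apply lt_min <;> positivity
  have hτ1 : τ ≤ θ * d / 4 := min_le_left _ _
  have hτ2 : τ ≤ d / 4 := min_le_right _ _
  obtain ⟨r, hr, hrline⟩ := hhigh τ hτ0
  obtain ⟨κ, hκ, hT⟩ := mean_mul_compl_le hα Finset.univ r τ hτ0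
  obtain ⟨N, hN⟩ : ∃ N : ℝ, N = ((Nat.card (η × Option κ → Option α) : ℕ) : ℝ) := ⟨_, rfl⟩
  have hN1 : 1 ≤ N := by rw [hN]; exact_mod_cast Nat.card_pos
  have hN0 : 0 < N := by linarith
  set γ : ℝ := τ / (2 * N) with hγ
  have hγ0 : 0 < γ := by positivity
  have hγτ : 2 * γ * N = τ := by rw [hγ]; field_simp
  have hγ1 : γ < d := by nlinarith
  obtain ⟨ρ, hρ, hρline⟩ := hhigh γ hγ0
  -- a line-free set of almost critical density in a cube of dimension `η × (κ + 1) + ρ`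
  obtain ⟨A, hAd, hAline⟩ : ∃ A : Set ((η × Option κ) ⊕ ρ → Option α),
      d - γ ≤ mean (fun x => ind (x ∈ A)) ∧
      ¬∃ l : Line (Option α) ((η × Option κ) ⊕ ρ), ∀ b, l b ∈ A := by
    have := hlow (d - γ) (by linarith) (by linarith)
    by_contra! hc
    exact this ⟨_, inferInstance, hc⟩
  have hslice : ∀ y, d - τ ≤ mean fun z => ind (Sum.elim y z ∈ A) := by
    intro y
    have := le_of_mean_ge (F := fun y => mean fun z => ind (Sum.elim y z ∈ A)) (d := d) (γ := γ)
      (fun y => by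
        by_contra! hc
        obtain ⟨l, hl⟩ := hρline {z | Sum.elim y z ∈ A} hc.le
        exact hAline ⟨l.vertical y, fun b => by rw [Line.vertical_apply]; exact hl b⟩)
      (by rwa [mean_sumArrow, mean_comm] at hAd) y
    rw [← hN, hγτ] at this
    linarith
  -- `P σ w` is the point with coordinate `w e` at the `none`-coordinate of block `e`, and in the
  -- rest of block `e` the word `σ e` with its letters `none` replaced by `w e`
  let P : (η → κ → Option α) → (η → Option α) → (η × Option κ → Option α) := fun σ w p =>
    p.2.elim (w p.1) fun j => (σ p.1 j).or (w p.1)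
  obtain ⟨L, hL⟩ : ∃ L : Line α η, θ ≤ mean fun p : (η → κ → Option α) × (ρ → Option α) =>
      ind (∀ a, Sum.elim (P p.1 fun e => some (L a e)) p.2 ∈ A) := by
    have h1 : d / 2 ≤ mean fun p : (η → κ → Option α) × (ρ → Option α) =>
        mean fun w : η → α => ind (Sum.elim (P p.1 fun e => some (w e)) p.2 ∈ A) := by
      rw [mean_prod]
      refine le_mean fun σ => ?_
      rw [mean_comm]
      exact le_mean fun w => by linarith [hslice (P σ fun e => some (w e))]
    have h2 := half_le_mean_ind (fun p => mean_le fun w => ind_le_one _) (by linarith) h1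
    refine exists_pigeonhole (by linarith) (h2.trans (mean_mono fun p => ind_mono fun hp => ?_))
    exact hline {w | Sum.elim (P p.1 fun e => some (w e)) p.2 ∈ A} hp
  obtain ⟨e₀, he₀⟩ := L.proper
  -- the word of `L` is a point over `Option α`, and completes the points of `L` to a line
  have hdisj : ∀ σ z, (∀ a, Sum.elim (P σ fun e => some (L a e)) z ∈ A) →
      Sum.elim (P σ L.idxFun) z ∉ A := by
    intro σ z h1 h2
    refine hAline ⟨⟨Sum.elim (fun m => (P σ L.idxFun m).map some) fun i => some (z i),
      Sum.inl (e₀, none), by simp [P, he₀]⟩, fun b => ?_⟩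
    cases b with
    | none =>
      convert h2 using 1
      funext i
      rcases i with ⟨e, j⟩ | i
      · simp only [Line.coe_apply, Sum.elim_inl]
        cases P σ L.idxFun (e, j) <;> rfl
      · rfl
    | some a =>
      convert h1 a using 1
      funext i
      rcases i with ⟨e, _ | j⟩ | i
      · simp only [Line.coe_apply, Sum.elim_inl, P, Option.elim_none]
        cases L.idxFun e <;> rfl
      · simp only [Line.coe_apply, Sum.elim_inl, P, Option.elim_some]
        cases σ e j <;> cases L.idxFun e <;> rfl
      · rfl
  -- the density increment argument in the block `e₀`, everything else being fixed
  have hblock : ∀ σ z, (mean fun y =>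
        ind (Sum.elim (P (Function.update σ e₀ y) L.idxFun) z ∈ A)) -
      (d + τ) * (1 - mean fun y =>
        ind (∀ a, Sum.elim (P (Function.update σ e₀ y) fun e => some (L a e)) z ∈ A)) ≤ τ := by
    intro σ z
    let U : Subspace κ (Option α) ((η × Option κ) ⊕ ρ) :=
      { idxFun := Sum.elim (fun p => if p.1 = e₀ then p.2.elim (Sum.inl none) Sum.inr
          else Sum.inl (P σ L.idxFun p)) fun i => Sum.inl (z i)
        proper := fun j => ⟨Sum.inl (e₀, some j), by simp⟩ }
    have hU : ∀ y, U y = Sum.elim (P (Function.update σ e₀ y) L.idxFun) z := by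
      intro y
      funext i
      rcases i with ⟨e, j⟩ | i
      · by_cases he : e = e₀
        · subst he
          cases j <;> simp [U, Subspace.coe_apply, P, he₀]
        · simp [U, Subspace.coe_apply, P, he]
      · rfl
    have h := (hT (fun y => ind (U y ∈ A) - (d + τ))
      (fun y => by linarith [ind_le_one (U y ∈ A)])
      (fun V => by
        rw [mean_sub, mean_const]
        by_contra! hc
        obtain ⟨l, hl⟩ := hrline {x | U (V x) ∈ A} (sub_pos.1 hc).le
        refine hAline ⟨lineComp (subComp U V) l, fun b => ?_⟩
        rw [lineComp_apply, subComp_apply]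
        exact hl b)
      (fun a => {y | Sum.elim (P (Function.update σ e₀ y) fun e => some (L a e)) z ∈ A})
      (fun a x y hxy hx => by
        simp only [Set.mem_ofPred_eq] at hx ⊢
        convert hx using 2
        funext ⟨e, j⟩
        cases j with
        | none => rfl
        | some j =>
          by_cases he : e = e₀
          · subst he
            have := hxy j
            simp only [P, Option.elim_some, Function.update_self, Line.coe_apply, he₀,
              Option.getD_none]
            cases hx' : x j <;> cases hy' : y j <;> simp_all
          · simp [P, he])).2
    simp only [Finset.mem_univ, forall_true_left, Set.mem_ofPred_eq, hU] at h
    refine le_trans (le_of_eq ?_) h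
    rw [← mean_const (X := κ → Option α) 1, ← mean_sub, ← mean_const_mul, ← mean_sub]
    congr 1
    funext y
    by_cases hy : ∀ a, Sum.elim (P (Function.update σ e₀ y) fun e => some (L a e)) z ∈ A
    · rw [ind_true hy, ind_false (hdisj _ _ hy), mean_const]; ring
    · rw [ind_false hy, mean_const]; ring
  have hA' : d - τ ≤ mean fun p : (η → κ → Option α) × (ρ → Option α) =>
      ind (Sum.elim (P p.1 L.idxFun) p.2 ∈ A) := by
    rw [mean_prod]
    exact le_mean fun σ => hslice (P σ L.idxFun)
  rw [mean_prod, mean_comm] at hA' hL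
  simp only [mean_update e₀ (fun σ => ind (Sum.elim (P σ L.idxFun) _ ∈ A))] at hA'
  simp only [mean_update e₀ (fun σ => ind (∀ a, Sum.elim (P σ fun e => some (L a e)) _ ∈ A))] at hL
  have hfin := mean_le (X := ρ → Option α) fun z => mean_le fun σ => hblock σ z
  simp only [mean_sub, mean_const_mul, mean_const] at hfin
  nlinarith

lemma dhj_unit : DHJ Unit := by
  intro δ hδ
  refine ⟨Unit, inferInstance, fun A hA => ?_⟩
  obtain ⟨x, hx⟩ := exists_le_of_le_mean hA
  have hxA : x ∈ A := by
    by_contra hc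
    rw [ind_false hc] at hx
    linarith
  exact ⟨default, fun b => by rwa [Subsingleton.elim (Line.toFun _ b) x]⟩

/-- The density Hales–Jewett theorem for an alphabet of each positive size. -/
theorem exists_dhj (k : ℕ) :
    ∃ (α : Type) (_ : Finite α), Nonempty α ∧ Nat.card α = k + 1 ∧ DHJ α := by
  induction k with
  | zero => exact ⟨Unit, inferInstance, inferInstance, by simp, dhj_unit⟩
  | succ k ih =>
    obtain ⟨α, hfin, hne, hcard, h⟩ := ih
    exact ⟨Option α, inferInstance, inferInstance, by rw [Finite.card_option, hcard],
      dhj_option h⟩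

/-! ### From combinatorial lines to arithmetic progressions -/

/-- A nonempty subsum of independent uniform elements of a finite group is uniform. -/
lemma mean_subsum {ι M : Type*} [Fintype ι] [AddCommGroup M] [Finite M]
    (p : ι → Prop) [DecidablePred p] (i₀ : ι) (hi₀ : p i₀) (h : M → ℝ) :
    (mean fun r : ι → M => h (∑ i, if p i then r i else 0)) = mean h := by
  classical
  rw [mean_update i₀]
  have : ∀ r : ι → M, (mean fun t => h (∑ i, if p i then Function.update r i₀ t i else 0)) =
      mean h := by
    intro r
    rw [← mean_equiv (Equiv.addRight (∑ i ∈ Finset.univ.erase i₀, if p i then r i else 0)) h]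
    congr 1
    funext t
    rw [← Finset.add_sum_erase _ _ (Finset.mem_univ i₀)]
    simp only [hi₀, if_true, Function.update_self, Equiv.coe_addRight]
    congr 2
    refine Finset.sum_congr rfl fun i hi => ?_
    rw [Function.update_of_ne (Finset.ne_of_mem_erase hi)]
  simp only [this, mean_const]

end

/-- **Szemerédi's theorem, weighted version.**
For every `k ≥ 3` and `δ > 0` there exist `c > 0` and `N₀` such that for every `N ≥ N₀`
and every `f : ZMod N → [0,1]` with `E[f] ≥ δ`, one has
`E[f(x) f(x+d) ⋯ f(x+(k-1)d) | x, d ∈ ZMod N] ≥ c`. -/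
theorem szemeredi_weighted (k : ℕ) (hk : 3 ≤ k) (δ : ℝ) (hδ : 0 < δ) :
    ∃ c : ℝ, 0 < c ∧ ∃ N₀ : ℕ, ∀ N : ℕ, N₀ ≤ N → ∀ [NeZero N],
      ∀ f : ZMod N → ℝ, (∀ x, 0 ≤ f x ∧ f x ≤ 1) → δ ≤ avg f →
      c ≤ avg (fun p : ZMod N × ZMod N =>
        ∏ i ∈ Finset.range k, f (p.1 + (i : ZMod N) * p.2)) := by
  classical
  obtain ⟨α, hfin, hne, hcard, hα⟩ := exists_dhj (k - 1)
  obtain ⟨ι, hι, hline⟩ := hα (δ / 2 / 2) (by linarith)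
  have := Fintype.ofFinite ι
  let v : α ≃ Fin k := Finite.equivFinOfCardEq (by omega)
  set θ : ℝ := δ / 2 / 2 / (Nat.card (Line α ι) + 1) with hθ
  have hθ0 : 0 < θ := by positivity
  refine ⟨θ * (δ / 2) ^ k, by positivity, 0, fun N _ _ f hf hmean => ?_⟩
  have hA : δ / 2 ≤ mean fun x => ind (δ / 2 ≤ f x) :=
    half_le_mean_ind (fun x => (hf x).2) hδ.le (by rw [mean_eq]; exact hmean)
  -- random embedding of the cube in `ZMod N`, sending lines to arithmetic progressions
  let φ : (ι → ZMod N) → (ι → α) → ZMod N := fun r w => ∑ i, ((v (w i) : ℕ) : ZMod N) * r i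
  obtain ⟨L, hL⟩ : ∃ L : Line α ι, θ ≤ mean fun p : (ι → ZMod N) × ZMod N =>
      ind (∀ b, δ / 2 ≤ f (p.2 + φ p.1 (L b))) := by
    have h1 : δ / 2 ≤ mean fun p : (ι → ZMod N) × ZMod N => mean fun w : ι → α =>
        ind (δ / 2 ≤ f (p.2 + φ p.1 w)) := by
      rw [mean_prod]
      refine le_mean fun r => ?_
      rw [mean_comm]
      refine le_mean fun w => hA.trans_eq ?_
      exact (mean_equiv (Equiv.addRight (φ r w)) fun x => ind (δ / 2 ≤ f x)).symm
    have h2 := half_le_mean_ind (fun p => mean_le fun w => ind_le_one _) (by linarith) h1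
    refine exists_pigeonhole (by linarith) (h2.trans (mean_mono fun p => ind_mono fun hp => ?_))
    exact hline {w | δ / 2 ≤ f (p.2 + φ p.1 w)} hp
  obtain ⟨i₀, hi₀⟩ := L.proper
  let base : (ι → ZMod N) → ZMod N := fun r =>
    ∑ i, (L.idxFun i).elim 0 fun a => ((v a : ℕ) : ZMod N) * r i
  have hφ : ∀ r b, φ r (L b) =
      base r + ((v b : ℕ) : ZMod N) * ∑ i, if L.idxFun i = none then r i else 0 := by
    intro r b
    simp only [φ, base, Finset.mul_sum, ← Finset.sum_add_distrib]
    refine Finset.sum_congr rfl fun i _ => ?_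
    cases h : L.idxFun i <;> simp [h]
  have hL' : θ ≤ mean fun d : ZMod N => mean fun x : ZMod N =>
      ind (∀ b, δ / 2 ≤ f (x + ((v b : ℕ) : ZMod N) * d)) := by
    rw [← mean_subsum (ι := ι) (fun i => L.idxFun i = none) i₀ hi₀]
    rw [mean_prod] at hL
    refine hL.trans_eq ?_
    congr 1
    funext r
    refine Eq.trans ?_ (mean_equiv (Equiv.addRight (base r)) _)
    simp only [hφ, Equiv.coe_addRight, add_assoc]
  rw [mean_comm] at hL'
  calc θ * (δ / 2) ^ k
      ≤ (mean fun x : ZMod N => mean fun d : ZMod N =>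
          ind (∀ b, δ / 2 ≤ f (x + ((v b : ℕ) : ZMod N) * d))) * (δ / 2) ^ k := by gcongr
    _ = mean fun p : ZMod N × ZMod N =>
          ind (∀ b, δ / 2 ≤ f (p.1 + ((v b : ℕ) : ZMod N) * p.2)) * (δ / 2) ^ k := by
        rw [mean_mul_const, mean_prod]
    _ ≤ mean fun p : ZMod N × ZMod N =>
          ∏ i ∈ Finset.range k, f (p.1 + (i : ZMod N) * p.2) := by
        refine mean_mono fun p => ?_
        by_cases hp : ∀ b, δ / 2 ≤ f (p.1 + ((v b : ℕ) : ZMod N) * p.2)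
        · rw [ind_true hp, one_mul]
          calc (δ / 2) ^ k = ∏ _i ∈ Finset.range k, δ / 2 := by simp [div_pow]
            _ ≤ _ := by
              refine Finset.prod_le_prod (fun i _ => by positivity) fun i hi => ?_
              simpa using hp (v.symm ⟨i, Finset.mem_range.1 hi⟩)
        · rw [ind_false hp, zero_mul]
          exact Finset.prod_nonneg fun i _ => (hf _).1
    _ = _ := mean_eq _
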